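/- Let ε ∈ [0, 1/2), set k' = ⌊log₂(2/(1 − 2ε))⌋, and let n ≥ k'. Then there exists a CNF formula φ over n variables with φ⁻¹(1) ⊆ Parity_n⁻¹(1), Pr_{x uniform in {0,1}^n}[φ(x) ≠ Parity_n(x)] ≤ ε, and |φ| ≤ k' · 2^{⌈n/k'⌉ − 1}. -/

import Mathlib

/-!
Write `k = ⌊log₂ (2 / (1 - 2ε))⌋`, so that `k ≥ 1` and `1/2 - 2⁻ᵏ ≤ ε`. Split the coordinates into
`k` nonempty blocks according to their index mod `k`; each block has at most `⌈n/k⌉` elements. Let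
`φ` assert that the first block contains an odd number of ones and every other block an even
number. Then `φ` implies that the total number of ones is odd.

* Size: the condition on a block `B` is a conjunction of clauses, one for each subset of `B` of the
  wrong parity (`clauseOf`, `exists_clauseOf_iff`), and there are at most `2 ^ (|B| - 1)` of these
  (`card_wrong_parity_le`).
* Error: the value of `x` at the coordinates `≥ k` can be completed to a satisfying assignment,
  since the `r`-th coordinate adjusts the parity of the `r`-th block. Hence `φ` has at least
  `2 ^ (n - k)` satisfying assignments (`two_pow_le_card_sat`), all among the at most `2 ^ (n - 1)`
  odd inputs, and it errs with probability at most `1/2 - 2⁻ᵏ`.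
-/

/-! ### CNF formulas and Boolean functions -/

/-- A literal over `n` variables: a coordinate `x_i` (if `neg = false`)
or its negation `¬ x_i` (if `neg = true`). -/
structure Lit (n : ℕ) where
  idx : Fin n
  neg : Bool
deriving DecidableEq

/-- Evaluation of a literal at an assignment. -/
def Lit.eval {n : ℕ} (l : Lit n) (x : Fin n → Bool) : Bool :=
  if l.neg then !(x l.idx) else x l.idx

/-- A clause: a finite set of literals, evaluated as their disjunction. -/
abbrev Clause (n : ℕ) := Finset (Lit n)

/-- A CNF formula: a finite set of clauses, evaluated as their conjunction.
Its size is its number of clauses (`Finset.card`). -/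
abbrev CNF (n : ℕ) := Finset (Clause n)

/-- `φ.sat x` means the CNF formula `φ` evaluates to `1` at `x`. -/
def CNF.sat {n : ℕ} (φ : CNF n) (x : Fin n → Bool) : Prop :=
  ∀ c ∈ φ, ∃ l ∈ c, l.eval x = true

instance {n : ℕ} (φ : CNF n) (x : Fin n → Bool) : Decidable (φ.sat x) :=
  inferInstanceAs (Decidable (∀ c ∈ φ, ∃ l ∈ c, Lit.eval l x = true))

/-- `φ⁻¹(1) ⊆ f⁻¹(1)`: the formula does not err on inputs where `f` is `0`. -/
def CNF.onesided {n : ℕ} (φ : CNF n) (f : (Fin n → Bool) → Bool) : Prop :=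
  ∀ x, φ.sat x → f x = true

/-- A CNF formula is monotone if none of its literals is negated. -/
def CNF.mono {n : ℕ} (φ : CNF n) : Prop :=
  ∀ c ∈ φ, ∀ l ∈ c, l.neg = false

/-- A distribution on `f⁻¹(1)`: nonnegative, supported on `f⁻¹(1)`, summing to 1. -/
def IsDistOn {n : ℕ} (μ : (Fin n → Bool) → ℝ) (f : (Fin n → Bool) → Bool) : Prop :=
  (∀ x, 0 ≤ μ x) ∧ (∀ x, f x = false → μ x = 0) ∧ (∑ x, μ x) = 1

/-- `Pr_{x ∼ μ}[φ(x) = 1]`. -/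
noncomputable def CNF.pr {n : ℕ} (φ : CNF n) (μ : (Fin n → Bool) → ℝ) : ℝ :=
  ∑ x, if φ.sat x then μ x else 0

/-- `D_μ(f)`: the maximum, over CNF formulas `φ` with `φ⁻¹(1) ⊆ f⁻¹(1)` and `|φ| ≥ 1`,
of `Pr_{x∼μ}[φ(x)=1] / |φ|` (0 if there is no such formula). -/
noncomputable def Dmu {n : ℕ} (f : (Fin n → Bool) → Bool) (μ : (Fin n → Bool) → ℝ) : ℝ :=
  sSup {r : ℝ | ∃ φ : CNF n, φ.onesided f ∧ 1 ≤ φ.card ∧ r = φ.pr μ / φ.card}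

/-- `D(f)`: the minimum of `D_μ(f)` over distributions `μ` on `f⁻¹(1)`. -/
noncomputable def Dof {n : ℕ} (f : (Fin n → Bool) → Bool) : ℝ :=
  sInf {r : ℝ | ∃ μ, IsDistOn μ f ∧ r = Dmu f μ}

/-- The monotone variant `D⁺_μ(f)`, restricted to monotone CNF formulas. -/
noncomputable def DmuPlus {n : ℕ} (f : (Fin n → Bool) → Bool) (μ : (Fin n → Bool) → ℝ) : ℝ :=
  sSup {r : ℝ | ∃ φ : CNF n, φ.mono ∧ φ.onesided f ∧ 1 ≤ φ.card ∧ r = φ.pr μ / φ.card}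

/-- `D⁺(f)`: the minimum of `D⁺_μ(f)` over distributions `μ` on `f⁻¹(1)`. -/
noncomputable def DPlus {n : ℕ} (f : (Fin n → Bool) → Bool) : ℝ :=
  sInf {r : ℝ | ∃ μ, IsDistOn μ f ∧ r = DmuPlus f μ}

/-- A list of CNF formulas computes `f` as their pointwise disjunction. -/
def ComputedByOr {n : ℕ} (L : List (CNF n)) (f : (Fin n → Bool) → Bool) : Prop :=
  ∀ x, f x = true ↔ ∃ φ ∈ L, φ.sat x

/-- `L₃(f)`: the minimum size (total number of clauses) of a depth-3 formula computing `f`. -/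
noncomputable def L3 {n : ℕ} (f : (Fin n → Bool) → Bool) : ℕ :=
  sInf {s : ℕ | ∃ L : List (CNF n), ComputedByOr L f ∧ s = (L.map Finset.card).sum}

/-- `L₃⁺(f)`: the minimum size of a depth-3 monotone formula computing `f`. -/
noncomputable def L3Plus {n : ℕ} (f : (Fin n → Bool) → Bool) : ℕ :=
  sInf {s : ℕ | ∃ L : List (CNF n), (∀ φ ∈ L, φ.mono) ∧ ComputedByOr L f ∧
    s = (L.map Finset.card).sum}

/-- The number of ones in a Boolean input. -/
def ones {n : ℕ} (x : Fin n → Bool) : ℕ := (Finset.univ.filter fun i => x i = true).card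

/-- The parity function: `1` iff the number of ones is odd. -/
def parityF (n : ℕ) : (Fin n → Bool) → Bool := fun x => decide (ones x % 2 = 1)

/-- The majority function: `1` iff the number of ones is at least `n/2`. -/
def majF (n : ℕ) : (Fin n → Bool) → Bool := fun x => decide (n ≤ 2 * ones x)

/-- `Pr_{x uniform in f⁻¹(1)}[φ(x) = 1]`. -/
noncomputable def prUnif {n : ℕ} (f : (Fin n → Bool) → Bool) (φ : CNF n) : ℝ :=
  ((Finset.univ.filter fun x => f x = true ∧ φ.sat x).card : ℝ) /
    ((Finset.univ.filter fun x => f x = true).card : ℝ)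

/-- `x` is an isolated solution of `φ`: `φ(x)=1` and `φ(y)=0` for every `y`
differing from `x` in exactly one coordinate. -/
def IsIsolated {n : ℕ} (φ : CNF n) (x : Fin n → Bool) : Prop :=
  φ.sat x ∧ ∀ y : Fin n → Bool, hammingDist x y = 1 → ¬ φ.sat y

/-! ### Subsets of a given parity -/

/-- Among the subsets of a nonempty set, at most half avoid a given parity: removing a fixed
element `a` is injective on subsets of equal parity. -/
lemma card_wrong_parity_le {α : Type*} [DecidableEq α] (B : Finset α) (hB : B.Nonempty)
    (c : ZMod 2) :
    (B.powerset.filter (fun S => (S.card : ZMod 2) ≠ c)).card ≤ 2 ^ (B.card - 1) := by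
  obtain ⟨a, ha⟩ := hB
  rw [← Finset.card_erase_of_mem ha, ← Finset.card_powerset]
  refine Finset.card_le_card_of_injOn (fun S => S.erase a) ?_ ?_
  · intro S hS
    simp only [Finset.coe_filter, Finset.mem_powerset, Set.mem_ofPred_eq] at hS
    exact Finset.mem_coe.2 (Finset.mem_powerset.2 (Finset.erase_subset_erase a hS.1))
  · intro S hS T hT h
    simp only [Finset.coe_filter, Finset.mem_powerset, Set.mem_ofPred_eq] at hS hT
    have key : ∀ u v c : ZMod 2, u ≠ c → v ≠ c → u = v := by decide
    have hST := key _ _ _ hS.2 hT.2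
    have h : S.erase a = T.erase a := h
    have hne : ∀ u : ZMod 2, u + 1 ≠ u := by decide
    by_cases h1 : a ∈ S <;> by_cases h2 : a ∈ T
    · rw [← Finset.insert_erase h1, ← Finset.insert_erase h2, h]
    · exfalso
      rw [Finset.erase_eq_of_notMem h2] at h
      rw [← Finset.card_erase_add_one h1, h] at hST
      push_cast at hST
      exact hne _ hST
    · exfalso
      rw [Finset.erase_eq_of_notMem h1] at h
      rw [← Finset.card_erase_add_one h2, ← h] at hST
      push_cast at hST
      exact hne _ hST.symm
    · rwa [Finset.erase_eq_of_notMem h1, Finset.erase_eq_of_notMem h2] at h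

/-! ### The block formula -/

/-- The clause over the variables in `B` that is falsified exactly when the set of ones within `B`
is `S` (for `S ⊆ B`). -/
def clauseOf {n : ℕ} (B S : Finset (Fin n)) : Clause n :=
  B.image (fun i => ⟨i, decide (i ∈ S)⟩)

lemma exists_clauseOf_iff {n : ℕ} (B S : Finset (Fin n)) (hS : S ⊆ B) (x : Fin n → Bool) :
    (∃ l ∈ clauseOf B S, l.eval x = true) ↔ B.filter (fun i => x i = true) ≠ S := by
  rw [← not_iff_not]
  constructor
  · intro h
    push Not at h ⊢
    ext i
    by_cases hi : i ∈ B
    · have := h ⟨i, decide (i ∈ S)⟩ (Finset.mem_image_of_mem _ hi)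
      by_cases hs : i ∈ S <;> simpa [Lit.eval, hs, hi] using this
    · have : i ∉ S := fun h => hi (hS h)
      simp [hi, this]
  · rintro h ⟨l, hl, he⟩
    push Not at h
    obtain ⟨i, hi, rfl⟩ := Finset.mem_image.1 hl
    have : i ∈ S ↔ x i = true := by rw [← h]; simp [hi]
    by_cases hs : i ∈ S <;> simp_all [Lit.eval]

/-- The `r`-th block of coordinates: those congruent to `r` mod `k`. -/
def block (n k r : ℕ) : Finset (Fin n) := Finset.univ.filter (fun i => i.1 % k = r)

lemma card_block_le (n k r : ℕ) (hk : 0 < k) : (block n k r).card ≤ ⌈(n : ℝ) / (k : ℝ)⌉₊ := by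
  rw [← Finset.card_range ⌈(n : ℝ) / (k : ℝ)⌉₊]
  refine Finset.card_le_card_of_injOn (fun i => i.1 / k) ?_ ?_
  · intro i _
    simp only [Finset.coe_range, Set.mem_Iio]
    rw [Nat.lt_ceil]
    have : ((i.1 / k : ℕ) : ℝ) ≤ (i.1 : ℝ) / k := Nat.cast_div_le
    refine this.trans_lt ?_
    have : (i.1 : ℝ) < n := by exact_mod_cast i.2
    gcongr
  · intro i hi j hj h
    simp only [block, Finset.coe_filter, Finset.mem_univ, true_and, Set.mem_ofPred_eq] at hi hj
    have h : i.1 / k = j.1 / k := h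
    ext
    rw [← Nat.div_add_mod i.1 k, ← Nat.div_add_mod j.1 k, hi, hj, h]

/-- The target parity of the `r`-th block: odd for `r = 0`, even otherwise. -/
def target (r : ℕ) : ZMod 2 := if r = 0 then 1 else 0

/-- The formula requiring, for every `r < k`, that the number of ones in the `r`-th block has
parity `target r`. -/
def blockCNF (n k : ℕ) : CNF n :=
  (Finset.range k).biUnion fun r =>
    ((block n k r).powerset.filter (fun S => (S.card : ZMod 2) ≠ target r)).image
      (clauseOf (block n k r))

/-- A bit as an element of `ZMod 2`. -/
def bit (b : Bool) : ZMod 2 := if b = true then 1 else 0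

lemma sat_blockCNF {n k : ℕ} (x : Fin n → Bool) :
    (blockCNF n k).sat x ↔ ∀ r < k, ∑ i ∈ block n k r, bit (x i) = target r := by
  have hc : ∀ r, ∑ i ∈ block n k r, bit (x i)
      = (((block n k r).filter (fun i => x i = true)).card : ZMod 2) := by
    intro r
    simp [bit]
  constructor
  · intro h r hr
    by_contra hne
    rw [hc] at hne
    refine (exists_clauseOf_iff (block n k r) _ (Finset.filter_subset _ _) x).1
      (h _ (Finset.mem_biUnion.2 ⟨r, Finset.mem_range.2 hr, Finset.mem_image_of_mem _
        (Finset.mem_filter.2 ⟨Finset.mem_powerset.2 (Finset.filter_subset _ _), hne⟩)⟩)) rfl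
  · intro h c hcm
    obtain ⟨r, hr, hcm⟩ := Finset.mem_biUnion.1 hcm
    obtain ⟨S, hS, rfl⟩ := Finset.mem_image.1 hcm
    obtain ⟨hS, hS'⟩ := Finset.mem_filter.1 hS
    rw [exists_clauseOf_iff _ _ (Finset.mem_powerset.1 hS)]
    rintro rfl
    exact hS' (by rw [← hc]; exact h r (Finset.mem_range.1 hr))

/-! ### Size and one-sidedness -/

lemma card_blockCNF_le {n k : ℕ} (hk : 0 < k) (hn : k ≤ n) :
    (blockCNF n k).card ≤ k * 2 ^ (⌈(n : ℝ) / (k : ℝ)⌉₊ - 1) := by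
  have := Finset.card_biUnion_le_card_mul (Finset.range k) (fun r =>
    ((block n k r).powerset.filter (fun S => (S.card : ZMod 2) ≠ target r)).image
      (clauseOf (block n k r))) (2 ^ (⌈(n : ℝ) / (k : ℝ)⌉₊ - 1)) ?_
  · rwa [Finset.card_range] at this
  · intro r hr
    have hr := Finset.mem_range.1 hr
    refine Finset.card_image_le.trans ((card_wrong_parity_le _ ?_ _).trans ?_)
    · exact ⟨⟨r, hr.trans_le hn⟩, by simp [block, Nat.mod_eq_of_lt hr]⟩
    · exact Nat.pow_le_pow_right (by norm_num) (Nat.sub_le_sub_right (card_block_le n k r hk) 1)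

lemma parityF_iff {n : ℕ} (x : Fin n → Bool) :
    parityF n x = true ↔ (ones x : ZMod 2) = 1 := by
  rw [parityF, decide_eq_true_iff, ← Nat.odd_iff, ZMod.natCast_eq_one_iff_odd]

lemma onesided_blockCNF {n k : ℕ} (hk : 0 < k) : (blockCNF n k).onesided (parityF n) := by
  intro x hx
  rw [sat_blockCNF] at hx
  rw [parityF_iff]
  have h1 : (ones x : ZMod 2) = ∑ i, bit (x i) := by
    simp [ones, bit]
  rw [h1, ← Finset.sum_fiberwise_of_maps_to (t := Finset.range k) (g := fun i : Fin n => i.1 % k)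
    (fun i _ => Finset.mem_range.2 (Nat.mod_lt _ hk))]
  refine (Finset.sum_congr rfl (fun r hr => hx r (Finset.mem_range.1 hr))).trans ?_
  change ∑ r ∈ Finset.range k, (if r = 0 then (1 : ZMod 2) else 0) = 1
  simp [hk]

/-! ### Error probability -/

/-- Any input becomes satisfying after changing only its first `k` coordinates, one per block. -/
lemma exists_sat_agree {n k : ℕ} (hn : k ≤ n) (x : Fin n → Bool) :
    ∃ s : Fin n → Bool, (blockCNF n k).sat s ∧ ∀ i : Fin n, k ≤ i.1 → s i = x i := by
  refine ⟨fun i => if i.1 < k then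
    decide (target i.1 - ∑ j ∈ (block n k i.1).erase i, bit (x j) = 1) else x i, ?_, ?_⟩
  · rw [sat_blockCNF]
    intro r hr
    have hm : (⟨r, hr.trans_le hn⟩ : Fin n) ∈ block n k r := by
      simp [block, Nat.mod_eq_of_lt hr]
    have hbit : ∀ z : ZMod 2, bit (decide (z = 1)) = z := by decide
    rw [← Finset.sum_erase_add _ _ hm]
    have hrest : ∀ j ∈ (block n k r).erase ⟨r, hr.trans_le hn⟩, ¬ j.1 < k := by
      intro j hj hjk
      obtain ⟨h1, h2⟩ := Finset.mem_erase.1 hj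
      simp only [block, Finset.mem_filter, Finset.mem_univ, true_and] at h2
      rw [Nat.mod_eq_of_lt hjk] at h2
      exact h1 (Fin.ext h2)
    rw [Finset.sum_congr rfl (fun j hj => by rw [if_neg (hrest j hj)]), if_pos hr, hbit]
    ring
  · intro i hi
    simp [not_lt.2 hi]

/-- At least a `2⁻ᵏ` fraction of all inputs satisfies `blockCNF n k`. -/
lemma two_pow_le_card_sat {n k : ℕ} (hn : k ≤ n) :
    2 ^ n ≤ 2 ^ k * (Finset.univ.filter fun x : Fin n → Bool => (blockCNF n k).sat x).card := by
  have := Fintype.card_le_of_surjective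
    (fun p : (Fin k → Bool) × {x : Fin n → Bool // (blockCNF n k).sat x} =>
      fun i : Fin n => if h : i.1 < k then p.1 ⟨i.1, h⟩ else p.2.1 i) ?_
  · simpa [Fintype.card_subtype] using this
  · intro x
    obtain ⟨s, hs, hsx⟩ := exists_sat_agree hn x
    refine ⟨(fun i => x ⟨i.1, i.2.trans_le hn⟩, ⟨s, hs⟩), ?_⟩
    funext i
    by_cases h : i.1 < k
    · simp [h]
    · simp [h, hsx i (not_lt.1 h)]

lemma card_odd_le {n : ℕ} (hn : 0 < n) :
    (Finset.univ.filter fun x : Fin n → Bool => parityF n x = true).card ≤ 2 ^ (n - 1) := by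
  have h := card_wrong_parity_le (Finset.univ : Finset (Fin n)) ⟨⟨0, hn⟩, Finset.mem_univ _⟩ 0
  rw [Finset.card_univ, Fintype.card_fin] at h
  refine le_trans (Finset.card_le_card_of_injOn
    (fun x => Finset.univ.filter fun i => x i = true) ?_ ?_) h
  · intro x hx
    simp only [Finset.coe_filter, Finset.mem_univ, true_and, Set.mem_ofPred_eq] at hx
    rw [parityF_iff, ones] at hx
    simp [hx]
  · intro x _ y _ hxy
    funext i
    have := Finset.ext_iff.1 hxy i
    simp only [Finset.mem_filter, Finset.mem_univ, true_and] at this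
    exact Bool.eq_iff_iff.2 this

lemma error_blockCNF {n k : ℕ} (hk : 0 < k) (hn : k ≤ n) :
    ((Finset.univ.filter fun x : Fin n → Bool =>
        ¬ ((blockCNF n k).sat x ↔ parityF n x = true)).card : ℝ) / 2 ^ n ≤ 1 / 2 - 1 / 2 ^ k := by
  set E := Finset.univ.filter fun x : Fin n → Bool =>
    ¬ ((blockCNF n k).sat x ↔ parityF n x = true)
  set A := Finset.univ.filter fun x : Fin n → Bool => (blockCNF n k).sat x
  set O := Finset.univ.filter fun x : Fin n → Bool => parityF n x = true
  have hEA : E.card + A.card ≤ O.card := by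
    rw [← Finset.card_union_of_disjoint]
    · refine Finset.card_le_card ?_
      intro x hx
      have := onesided_blockCNF (n := n) hk x
      simp only [E, A, O, Finset.mem_union, Finset.mem_filter, Finset.mem_univ, true_and] at hx ⊢
      tauto
    · rw [Finset.disjoint_left]
      intro x hx hx'
      have := onesided_blockCNF (n := n) hk x
      simp only [E, A, Finset.mem_filter, Finset.mem_univ, true_and] at hx hx'
      tauto
  have hO : 2 * O.card ≤ 2 ^ n := by
    have h : O.card ≤ 2 ^ (n - 1) := card_odd_le (hk.trans_le hn)
    obtain ⟨m, rfl⟩ : ∃ m, n = m + 1 := ⟨n - 1, by omega⟩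
    rw [pow_succ]
    simp only [Nat.add_sub_cancel] at h
    omega
  have hA : 2 ^ n ≤ 2 ^ k * A.card := two_pow_le_card_sat hn
  have hEA' : (E.card : ℝ) + A.card ≤ O.card := by exact_mod_cast hEA
  have hO' : 2 * (O.card : ℝ) ≤ 2 ^ n := by exact_mod_cast hO
  have hA' : (2 : ℝ) ^ n ≤ 2 ^ k * A.card := by exact_mod_cast hA
  have hA'' : (2 : ℝ) ^ n / 2 ^ k ≤ A.card := by
    rw [div_le_iff₀ (by positivity)]
    linarith
  rw [div_le_iff₀ (by positivity), sub_mul, one_div_mul_eq_div, one_div_mul_eq_div]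
  linarith

/-- upper bound for one-sided CNF approximation of parity with error `ε`. -/
theorem stmt18 (ε : ℝ) (hε0 : 0 ≤ ε) (hε1 : ε < 1 / 2) (n : ℕ)
    (hn : ⌊Real.logb 2 (2 / (1 - 2 * ε))⌋₊ ≤ n) :
    ∃ φ : CNF n, φ.onesided (parityF n) ∧
      ((Finset.univ.filter fun x : Fin n → Bool =>
        ¬ (φ.sat x ↔ parityF n x = true)).card : ℝ) / 2 ^ n ≤ ε ∧
      φ.card ≤ ⌊Real.logb 2 (2 / (1 - 2 * ε))⌋₊ *
        2 ^ (⌈(n : ℝ) / (⌊Real.logb 2 (2 / (1 - 2 * ε))⌋₊ : ℝ)⌉₊ - 1) := by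
  have hpos : 0 < 1 - 2 * ε := by linarith
  have hlog : 1 ≤ Real.logb 2 (2 / (1 - 2 * ε)) := by
    rw [Real.le_logb_iff_rpow_le (by norm_num) (by positivity), Real.rpow_one,
      le_div_iff₀ hpos]
    linarith
  have hk : 0 < ⌊Real.logb 2 (2 / (1 - 2 * ε))⌋₊ := Nat.floor_pos.2 hlog
  have hfl : (⌊Real.logb 2 (2 / (1 - 2 * ε))⌋₊ : ℝ) ≤ Real.logb 2 (2 / (1 - 2 * ε)) :=
    Nat.floor_le (by linarith)
  generalize ⌊Real.logb 2 (2 / (1 - 2 * ε))⌋₊ = k at *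
  rw [Real.le_logb_iff_rpow_le (by norm_num) (by positivity), Real.rpow_natCast,
    le_div_iff₀ hpos] at hfl
  refine ⟨blockCNF n k, onesided_blockCNF hk, (error_blockCNF hk hn).trans ?_,
    card_blockCNF_le hk hn⟩
  have h2 : (1 - 2 * ε) / 2 ≤ 1 / 2 ^ k := by
    rw [le_div_iff₀ (by positivity)]
    linarith
  linarith
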